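/- Let c be a positive integer. For the BB(c̄, c̄, c+1, c+1) code, with f = 1 + x + x^{-c} y^{c+1} and g = 1 + y + y^{-c} x^{c+1} in R, the topological index is Q = dim_{F₂} R ⧸ (f, g) = c − p₂(c), where p₂(c) is the largest power of 2 dividing c (i.e., p₂(c) = 2^{ν₂(c)} with ν₂ the 2-adic valuation, Nat.ordProj 2 c in Mathlib). In particular Q = 0 whenever c is a power of 2. -/

import Mathlib

noncomputable section

/-- The Laurent polynomial ring `F₂[x^±, y^±]` as a group algebra. -/
abbrev LaurentR : Type := AddMonoidAlgebra (ZMod 2) (ℤ × ℤ)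

/-- The monomial `x^i y^j`. -/
def mono (i j : ℤ) : LaurentR := AddMonoidAlgebra.single (i, j) 1

/-!
Put `r = x⁻ᶜ yᶜ`, a unit, so that `f = 1 + x + r y` and `g = 1 + y + r⁻¹ x`. Then
`f - r g = 1 - r`, hence `(f, g) = (1 + x + y, 1 - r) = (1 + x + y, xᶜ - yᶜ)` over any coefficient
ring `K`. Eliminating `y = -(x + 1)` turns the quotient into `K[X] ⧸ (P)` with
`P = Xᶜ - (-(X + 1))ᶜ`, and no localization remains: modulo `P` the coprime elements `X` and
`-(X + 1)` have equal `c`-th powers, so they are already invertible. If `(-1)ᶜ = 1` and `c = q m`,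
with `q` the largest power of the characteristic exponent dividing `c`, then
`P = (Xᵐ - (X + 1)ᵐ) ^ q` by Frobenius, and the base has degree `m - 1`.
-/

section Degree

open Polynomial

theorem natDegree_X_pow_sub_X_add_one_pow {R : Type*} [Ring R] {m : ℕ} (hm : (m : R) ≠ 0) :
    (X ^ m - (X + 1) ^ m : R[X]).natDegree = m - 1 := by
  have hm0 : m ≠ 0 := fun h => hm (by rw [h, Nat.cast_zero])
  refine natDegree_eq_of_le_of_coeff_ne_zero ?_ ?_
  · refine natDegree_le_iff_coeff_eq_zero.2 fun n hn => ?_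
    rw [coeff_sub, coeff_X_pow, coeff_X_add_one_pow]
    obtain rfl | hmn : n = m ∨ m < n := by omega
    · simp
    · simp [hmn.ne', Nat.choose_eq_zero_of_lt hmn]
  · have hchoose : m.choose (m - 1) = m := by
      rw [Nat.choose_symm_of_eq_add (by omega : m = (m - 1) + 1), Nat.choose_one_right]
    rw [coeff_sub, coeff_X_pow, coeff_X_add_one_pow, if_neg (by omega), hchoose, zero_sub]
    exact neg_ne_zero.2 hm

theorem natCast_ordCompl_ne_zero (R : Type*) [AddMonoidWithOne R] (p : ℕ) [ExpChar R p] {n : ℕ}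
    (hn : n ≠ 0) : ((ordCompl[p] n : ℕ) : R) ≠ 0 := by
  cases ‹ExpChar R p› with
  | zero => simpa using hn
  | prime hp => exact (CharP.cast_eq_zero_iff R p _).not.2 (Nat.not_dvd_ordCompl hp hn)

theorem natDegree_X_pow_sub_X_add_one_pow_expChar (R : Type*) [CommRing R] [IsDomain R] (p : ℕ)
    [ExpChar R p] {n : ℕ} (hn : n ≠ 0) :
    (X ^ n - (X + 1) ^ n : R[X]).natDegree = n - ordProj[p] n := by
  have hfrobenius : (X ^ n - (X + 1) ^ n : R[X]) =
      (X ^ ordCompl[p] n - (X + 1) ^ ordCompl[p] n) ^ ordProj[p] n := by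
    rw [sub_pow_expChar_pow, ← pow_mul, ← pow_mul, mul_comm, Nat.ordProj_mul_ordCompl_eq_self]
  rw [hfrobenius, natDegree_pow,
    natDegree_X_pow_sub_X_add_one_pow (natCast_ordCompl_ne_zero R p hn), Nat.mul_sub_one,
    Nat.ordProj_mul_ordCompl_eq_self]

end Degree

section CommRing

variable {B : Type*} [CommRing B]

theorem span_one_add_add_unit_mul (r : Bˣ) (a b : B) :
    Ideal.span {1 + a + r * b, 1 + b + ↑r⁻¹ * a} = Ideal.span {1 + a + b, 1 - (r : B)} := by
  have hr : (r : B) * ↑r⁻¹ = 1 := r.mul_inv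
  apply le_antisymm <;>
    rw [Ideal.span_le, Set.insert_subset_iff, Set.singleton_subset_iff] <;>
    simp only [SetLike.mem_coe, Ideal.mem_span_pair]
  · exact ⟨⟨1, -b, by ring⟩, ⟨1, ↑r⁻¹ * a, by linear_combination -a * hr⟩⟩
  · exact ⟨⟨1 + b, -b * r, by linear_combination -a * b * hr⟩,
      ⟨1, -(r : B), by linear_combination -a * hr⟩⟩

theorem span_one_add_add_zpow_mul_zpow (u v : Bˣ) (c : ℤ) :
    Ideal.span {1 + (u : B) + ↑(u ^ (-c) * v ^ (c + 1)),
        1 + (v : B) + ↑(u ^ (c + 1) * v ^ (-c))} =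
      Ideal.span {1 + (u : B) + v, ↑(u ^ c) - (↑(v ^ c) : B)} := by
  set r : Bˣ := u ^ (-c) * v ^ c with hr
  have hf : u ^ (-c) * v ^ (c + 1) = r * v := by
    rw [hr, zpow_add_one, mul_assoc]
  have hg : u ^ (c + 1) * v ^ (-c) = r⁻¹ * u := by
    rw [hr, zpow_add_one, mul_inv, zpow_neg, zpow_neg, inv_inv, mul_right_comm]
  have hsub : (↑(u ^ c) : B) * (1 - r) = ↑(u ^ c) - ↑(v ^ c) := by
    rw [mul_sub, mul_one, ← Units.val_mul, hr, zpow_neg, mul_inv_cancel_left]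
  rw [hf, hg, Units.val_mul r, Units.val_mul r⁻¹, span_one_add_add_unit_mul, Ideal.span_insert,
    ← Ideal.span_singleton_mul_left_unit (u ^ c).isUnit (1 - (r : B)), hsub, ← Ideal.span_insert]

theorem span_sub_pow_sub_pow (a b d : B) (n : ℕ) :
    Ideal.span {b - d, a ^ n - b ^ n} = Ideal.span {b - d, a ^ n - d ^ n} := by
  obtain ⟨z, hz⟩ := sub_dvd_pow_sub_pow b d n
  have hpow : a ^ n - d ^ n = a ^ n - b ^ n + z * (b - d) := by linear_combination hz
  rw [hpow, Ideal.span_pair_add_mul_left]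

end CommRing

theorem isUnit_of_isCoprime_of_pow_eq_pow {R : Type*} [CommSemiring R] {a b : R} {n : ℕ}
    (hn : n ≠ 0) (hab : IsCoprime a b) (hpow : a ^ n = b ^ n) : IsUnit a :=
  (isUnit_pow_iff hn).1 (hab.pow.isUnit_of_dvd (dvd_of_eq hpow))

/-- The ring `K[x^±, y^±]` of Laurent polynomials in two variables, encoded like `LaurentR` as a
group algebra, so that `LaurentR` is the case `K = ZMod 2`. -/
abbrev BivariateLaurent (K : Type*) [Semiring K] : Type _ := AddMonoidAlgebra K (ℤ × ℤ)

namespace BivariateLaurent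

section Semiring

variable (K : Type*) [Semiring K]

/-- The monomial `x^i y^j` as a unit, multiplicatively in the exponent `(i, j)`. -/
def unitMonomial : Multiplicative (ℤ × ℤ) →* (BivariateLaurent K)ˣ :=
  (AddMonoidAlgebra.of K (ℤ × ℤ)).toHomUnits

/-- The unit `x`. -/
def unitX : (BivariateLaurent K)ˣ := unitMonomial K (.ofAdd (1, 0))

/-- The unit `y`. -/
def unitY : (BivariateLaurent K)ˣ := unitMonomial K (.ofAdd (0, 1))

theorem single_eq_unitX_zpow_mul_unitY_zpow (i j : ℤ) :
    (AddMonoidAlgebra.single (i, j) 1 : BivariateLaurent K) = ↑(unitX K ^ i * unitY K ^ j) := by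
  have hexp : (.ofAdd (1, 0) ^ i * .ofAdd (0, 1) ^ j : Multiplicative (ℤ × ℤ)) = .ofAdd (i, j) := by
    simp [← ofAdd_zsmul, ← ofAdd_add]
  rw [unitX, unitY, ← map_zpow (unitMonomial K), ← map_zpow (unitMonomial K), ← map_mul, hexp]
  rfl

end Semiring

section CommSemiring

variable {K : Type*} [CommSemiring K]

theorem algHom_ext_units {B : Type*} [Semiring B] [Algebra K B] {φ ψ : BivariateLaurent K →ₐ[K] B}
    (hx : φ (unitX K) = ψ (unitX K)) (hy : φ (unitY K) = ψ (unitY K)) : φ = ψ := by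
  have hX : Units.map (φ : BivariateLaurent K →* B) (unitX K) = Units.map ψ (unitX K) :=
    Units.ext hx
  have hY : Units.map (φ : BivariateLaurent K →* B) (unitY K) = Units.map ψ (unitY K) :=
    Units.ext hy
  refine AddMonoidAlgebra.algHom_ext (fun ⟨i, j⟩ => ?_) (by ext)
  have hij : Units.map (φ : BivariateLaurent K →* B) (unitX K ^ i * unitY K ^ j) =
      Units.map ψ (unitX K ^ i * unitY K ^ j) := by
    simp only [map_mul, map_zpow, hX, hY]
  rw [single_eq_unitX_zpow_mul_unitY_zpow]
  exact congrArg Units.val hij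

variable {B : Type*} [CommSemiring B] [Algebra K B]

/-- Evaluation of Laurent polynomials at a pair of units. -/
def evalUnits (u v : Bˣ) : BivariateLaurent K →ₐ[K] B :=
  AddMonoidAlgebra.lift K B (ℤ × ℤ) <| (Units.coeHom B).comp <|
    ((zpowersHom Bˣ u).coprod (zpowersHom Bˣ v)).comp (MulEquiv.prodMultiplicative ℤ ℤ).toMonoidHom

@[simp]
theorem evalUnits_unitX (u v : Bˣ) : evalUnits u v (unitX K : BivariateLaurent K) = u := by
  simp [evalUnits, unitX, unitMonomial]

@[simp]
theorem evalUnits_unitY (u v : Bˣ) : evalUnits u v (unitY K : BivariateLaurent K) = v := by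
  simp [evalUnits, unitY, unitMonomial]

end CommSemiring

section Elimination

open Polynomial

variable {K : Type*} [CommRing K]

/-- The ideal `(y - q(x), p(x))`, modulo which `y` can be eliminated. -/
def eliminationIdeal (p q : K[X]) : Ideal (BivariateLaurent K) :=
  Ideal.span {(unitY K : BivariateLaurent K) - aeval ↑(unitX K) q, aeval ↑(unitX K) p}

theorem mk_unitY_eq_aeval (p q : K[X]) :
    Ideal.Quotient.mkₐ K (eliminationIdeal p q) (unitY K) =
      aeval (Ideal.Quotient.mkₐ K (eliminationIdeal p q) (unitX K)) q := by
  rw [aeval_algHom_apply]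
  exact Ideal.Quotient.eq.2 (Ideal.subset_span (Set.mem_insert _ _))

theorem aeval_mk_unitX_eq_zero (p q : K[X]) :
    aeval (Ideal.Quotient.mkₐ K (eliminationIdeal p q) (unitX K)) p = 0 := by
  rw [aeval_algHom_apply]
  exact Ideal.Quotient.eq_zero_iff_mem.2 (Ideal.subset_span (Set.mem_insert_of_mem _ rfl))

theorem eliminationIdeal_le_ker_evalUnits {p q : K[X]} {u v : (AdjoinRoot p)ˣ}
    (hu : ↑u = AdjoinRoot.root p) (hv : ↑v = aeval (AdjoinRoot.root p) q) :
    eliminationIdeal p q ≤ RingHom.ker (evalUnits (K := K) u v) := by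
  rw [eliminationIdeal, Ideal.span_le, Set.insert_subset_iff, Set.singleton_subset_iff]
  simp only [SetLike.mem_coe, RingHom.mem_ker, map_sub, ← aeval_algHom_apply, evalUnits_unitX,
    evalUnits_unitY, hu, hv, sub_self, AdjoinRoot.aeval_eq, AdjoinRoot.mk_self, and_self]

/-- Eliminating `y = q(x)` from `K[x^±, y^±] ⧸ (y - q(x), p(x))` leaves `K[X] ⧸ (p)`, provided that
the classes of `X` and `q` there are units `u` and `v`. -/
def quotientEliminationIdealAlgEquiv {p q : K[X]} {u v : (AdjoinRoot p)ˣ}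
    (hu : ↑u = AdjoinRoot.root p) (hv : ↑v = aeval (AdjoinRoot.root p) q) :
    (BivariateLaurent K ⧸ eliminationIdeal p q) ≃ₐ[K] AdjoinRoot p :=
  let π := Ideal.Quotient.mkₐ K (eliminationIdeal p q)
  let toRoot : BivariateLaurent K ⧸ eliminationIdeal p q →ₐ[K] AdjoinRoot p :=
    Ideal.Quotient.liftₐ _ (evalUnits u v) fun _ ha => eliminationIdeal_le_ker_evalUnits hu hv ha
  let ofRoot : AdjoinRoot p →ₐ[K] BivariateLaurent K ⧸ eliminationIdeal p q :=
    AdjoinRoot.liftAlgHom p (Algebra.ofId _ _) (π (unitX K)) (aeval_mk_unitX_eq_zero p q)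
  have toRoot_x : toRoot (π (unitX K)) = AdjoinRoot.root p := (evalUnits_unitX u v).trans hu
  have toRoot_y : toRoot (π (unitY K)) = aeval (AdjoinRoot.root p) q :=
    (evalUnits_unitY u v).trans hv
  have ofRoot_root : ofRoot (AdjoinRoot.root p) = π (unitX K) := AdjoinRoot.liftAlgHom_root ..
  AlgEquiv.ofAlgHom toRoot ofRoot
    (AdjoinRoot.algHom_ext ((congrArg toRoot ofRoot_root).trans toRoot_x))
    (Ideal.Quotient.algHom_ext K (algHom_ext_units
      ((congrArg ofRoot toRoot_x).trans ofRoot_root)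
      (calc
        ofRoot (toRoot (π (unitY K))) = ofRoot (aeval (AdjoinRoot.root p) q) := by rw [toRoot_y]
        _ = aeval (π (unitX K)) q := by rw [← aeval_algHom_apply, ofRoot_root]
        _ = π (unitY K) := (mk_unitY_eq_aeval p q).symm)))

end Elimination

section BivariateBicycle

open Polynomial

/-- The single-variable polynomial to which the two bivariate-bicycle polynomials reduce once
`y = -(x + 1)` is eliminated. -/
def eliminant (K : Type*) [CommRing K] (c : ℕ) : K[X] := X ^ c - (-(X + 1)) ^ c

theorem span_bb_eq_eliminationIdeal (K : Type*) [CommRing K] (c : ℕ) :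
    Ideal.span
        ({1 + AddMonoidAlgebra.single (1, 0) 1 +
            AddMonoidAlgebra.single (-(c : ℤ), (c : ℤ) + 1) 1,
          1 + AddMonoidAlgebra.single (0, 1) 1 +
            AddMonoidAlgebra.single ((c : ℤ) + 1, -(c : ℤ)) 1} : Set (BivariateLaurent K)) =
      eliminationIdeal (eliminant K c) (-(X + 1)) := by
  have hsum : 1 + (unitX K : BivariateLaurent K) + unitY K = unitY K - -(unitX K + 1) := by ring
  simp only [single_eq_unitX_zpow_mul_unitY_zpow, zpow_one, zpow_zero, one_mul, mul_one,
    eliminationIdeal, eliminant, map_sub, map_pow, map_neg, map_add, map_one, aeval_X]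
  rw [span_one_add_add_zpow_mul_zpow, zpow_natCast, zpow_natCast, Units.val_pow_eq_pow_val,
    Units.val_pow_eq_pow_val, hsum, span_sub_pow_sub_pow]

section Units

variable {K : Type*} [CommRing K] {c : ℕ}

theorem root_eliminant_pow_eq_aeval_pow :
    AdjoinRoot.root (eliminant K c) ^ c =
      aeval (AdjoinRoot.root (eliminant K c)) (-(X + 1) : K[X]) ^ c := by
  have h : aeval (AdjoinRoot.root (eliminant K c)) (eliminant K c) = 0 := by
    rw [AdjoinRoot.aeval_eq, AdjoinRoot.mk_self]
  rw [eliminant, map_sub, map_pow, map_pow, aeval_X] at h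
  exact sub_eq_zero.1 h

theorem isCoprime_root_eliminant :
    IsCoprime (AdjoinRoot.root (eliminant K c))
      (aeval (AdjoinRoot.root (eliminant K c)) (-(X + 1) : K[X])) :=
  ⟨-1, -1, by simp⟩

theorem isUnit_root_eliminant (hc : c ≠ 0) : IsUnit (AdjoinRoot.root (eliminant K c)) :=
  isUnit_of_isCoprime_of_pow_eq_pow hc isCoprime_root_eliminant
    root_eliminant_pow_eq_aeval_pow

theorem isUnit_aeval_root_eliminant (hc : c ≠ 0) :
    IsUnit (aeval (AdjoinRoot.root (eliminant K c)) (-(X + 1) : K[X])) :=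
  isUnit_of_isCoprime_of_pow_eq_pow hc isCoprime_root_eliminant.symm
    root_eliminant_pow_eq_aeval_pow.symm

end Units

theorem natDegree_eliminant {K : Type*} [CommRing K] [IsDomain K] (p : ℕ) [ExpChar K p] {c : ℕ}
    (hc : c ≠ 0) (hsign : (-1 : K) ^ c = 1) : (eliminant K c).natDegree = c - ordProj[p] c := by
  have hneg : (-1 : K[X]) ^ c = 1 := by rw [← C_1, ← C_neg, ← C_pow, hsign]
  rw [eliminant, neg_pow, hneg, one_mul, natDegree_X_pow_sub_X_add_one_pow_expChar K p hc]

end BivariateBicycle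

end BivariateLaurent

open BivariateLaurent in
/-- In characteristic zero `p = 1`, and then `ordProj[1] c = 1`. -/
theorem bb_diagonal_topological_index_general {K : Type*} [Field K] (p : ℕ) [ExpChar K p] {c : ℕ}
    (hc : 0 < c) (hsign : (-1 : K) ^ c = 1) :
    Module.finrank K (BivariateLaurent K ⧸ Ideal.span
      ({1 + AddMonoidAlgebra.single (1, 0) 1 +
          AddMonoidAlgebra.single (-(c : ℤ), (c : ℤ) + 1) 1,
        1 + AddMonoidAlgebra.single (0, 1) 1 +
          AddMonoidAlgebra.single ((c : ℤ) + 1, -(c : ℤ)) 1} : Set (BivariateLaurent K))) =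
      c - ordProj[p] c := by
  obtain ⟨u, hu⟩ := isUnit_root_eliminant (K := K) hc.ne'
  obtain ⟨v, hv⟩ := isUnit_aeval_root_eliminant (K := K) hc.ne'
  have e := quotientEliminationIdealAlgEquiv hu hv
  rw [span_bb_eq_eliminationIdeal, e.toLinearEquiv.finrank_eq,
    ← natDegree_eliminant p hc.ne' hsign]
  exact finrank_quotient_span_eq_natDegree

/-- For the BB(c̄, c̄, c+1, c+1) code, with `f = 1 + x + x^{-c} y^{c+1}` and
`g = 1 + y + y^{-c} x^{c+1}`, the topological index is `Q = c − p₂(c)`, where `p₂(c)` is the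
largest power of `2` dividing `c`; in particular `Q = 0` whenever `c` is a power of `2`. -/
theorem bb_diagonal_topological_index (c : ℕ) (hc : 0 < c) :
    Module.finrank (ZMod 2)
      (LaurentR ⧸ Ideal.span ({1 + mono 1 0 + mono (-(c : ℤ)) ((c : ℤ) + 1),
        1 + mono 0 1 + mono ((c : ℤ) + 1) (-(c : ℤ))} : Set LaurentR)) =
      c - 2 ^ (Nat.factorization c 2) ∧
    (∀ k : ℕ, c = 2 ^ k →
      Module.finrank (ZMod 2)
        (LaurentR ⧸ Ideal.span ({1 + mono 1 0 + mono (-(c : ℤ)) ((c : ℤ) + 1),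
          1 + mono 0 1 + mono ((c : ℤ) + 1) (-(c : ℤ))} : Set LaurentR)) = 0) := by
  have index := bb_diagonal_topological_index_general (K := ZMod 2) 2 hc
    (by rw [CharTwo.neg_eq, one_pow])
  exact ⟨index, fun k hk => index.trans (by simp [hk, Nat.prime_two.factorization_self])⟩
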